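/- arXiv:1706.08423 — 2 statements merged into one kernel-verified Lean document; each statement's English description precedes it below -/
import Mathlib

section
/- Let n be an even natural number with n - 1 a prime power, and let g be an element of PΓL(2, n-1) acting on the projective line over F_{n-1} (with n points). If g has an even number of fixed points, then for every odd i, the number of i-cycles of g is even. In particular, the cycle type of g is a disjoint union of pairs of cycles of equal length together with even-length cycles, so g preserves a partition of the n points into n/2 blocks of size 2. -/
/-- The full cycle type of a permutation: the multiset of lengths of the orbits,
i.e. the usual cycle type together with one part `1` for each fixed point. -/
def fullCycleType {α : Type*} [Fintype α] [DecidableEq α] (g : Equiv.Perm α) :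
    Multiset ℕ :=
  g.cycleType + Multiset.replicate (Fintype.card {x // g x = x}) 1

/-!
The points fixed by `g ^ i` are those on cycles of length dividing `i`, so
`#Fix (g ^ i) = ∑ d ∣ i, d * c d`, where `c d` is the number of `d`-cycles. If `g ^ i` has an even
number of fixed points for every odd `i`, then `c i` is even for odd `i` by strong induction.

That evenness comes from harmonic conjugation. If a semilinear transformation `h` of a projective
line fixes two points `p ≠ q`, then it commutes with the harmonic conjugation with respect to `p`
and `q`. In characteristic other than `2` this involution fixes only `p` and `q`, so it pairs off
the remaining fixed points of `h`. On the other hand, if a power of `g` has a unique fixed point,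
then that point is also the unique fixed point of `g`.

Finally, `⟨g⟩` acts on the points of period `d` through a free action of a cyclic group of order
`d`, so these points form a product of the set of `d`-cycles with that group. One of the factors has
even cardinality: a pairing of the cycles, or else translation by an element of order `2`, commutes
with `g`.
-/

open Function Equiv.Perm Finset Module
open scoped LinearAlgebra.Projectivization Matrix

/-- A fixed-point-free involution: its orbits form a partition of `α` into blocks of size `2`, and
a permutation preserves that partition if and only if it commutes with the involution. -/
structure IsPairing {α : Type*} (b : α → α) : Prop where
  involutive : Involutive b
  apply_ne (x : α) : b x ≠ x

theorem exists_isPairing_of_even_card {α : Type*} [Finite α] (h : Even (Nat.card α)) :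
    ∃ b : α → α, IsPairing b := by
  obtain ⟨m, hm⟩ := h
  obtain ⟨e⟩ : Nonempty (α ≃ Fin m ⊕ Fin m) := Finite.card_eq.1 (by simp [hm])
  have hne (s : Fin m ⊕ Fin m) : s.swap ≠ s := by cases s <;> simp
  exact ⟨fun x ↦ e.symm (e x).swap, fun x ↦ by simp, fun x hx ↦ hne _ (e.symm_apply_eq.1 hx)⟩

theorem exists_isPairing_of_free_action {G X : Type*} [Group G] [IsMulCommutative G] [Finite G]
    [MulAction G X] [Finite X] (hfree : ∀ x : X, MulAction.stabilizer G x = ⊥)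
    (hX : Even (Nat.card X)) :
    ∃ b : X → X, IsPairing b ∧ ∀ c : G, Function.Commute (c • ·) b := by
  let e := MulAction.selfEquivOrbitsQuotientProd hfree
  have he (c d : G) (q) : c • e.symm (q, d) = e.symm (q, c * d) := (mul_smul c d _).symm
  rw [Nat.card_congr e, Nat.card_prod, Nat.even_mul] at hX
  rcases hX with hQ | hG
  · obtain ⟨s, hs⟩ := exists_isPairing_of_even_card hQ
    refine ⟨fun x ↦ e.symm (s (e x).1, (e x).2),
      ⟨fun x ↦ by simp [hs.involutive _], fun x hx ↦ ?_⟩, fun c x ↦ ?_⟩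
    · exact hs.apply_ne _ (congrArg Prod.fst (e.symm_apply_eq.1 hx))
    · obtain ⟨⟨q, d⟩, rfl⟩ := e.symm.surjective x
      simp [he]
  · obtain ⟨z, hz⟩ := exists_prime_orderOf_dvd_card' 2 hG.two_dvd
    obtain ⟨hz2, hz1⟩ := orderOf_eq_prime_iff.1 hz
    refine ⟨(z • ·), ⟨fun x ↦ by simp [smul_smul, ← sq, hz2], fun x hx ↦ hz1 ?_⟩, fun c x ↦ ?_⟩
    · simpa only [hfree x, Subgroup.mem_bot] using MulAction.mem_stabilizer_iff.2 hx
    · simp only [smul_smul, mul_comm' c z]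

theorem exists_isPairing_of_minimalPeriod_eq {α : Type*} [Finite α] (g : Equiv.Perm α) (d : ℕ)
    (hg : ∀ x, minimalPeriod g x = d) (hα : Even (Nat.card α)) :
    ∃ b : α → α, IsPairing b ∧ Function.Commute g b := by
  have hfree (x : α) : MulAction.stabilizer (Subgroup.zpowers g) x = ⊥ := by
    rw [eq_bot_iff]
    rintro ⟨_, k, rfl⟩ hk
    have hd : (d : ℤ) ∣ k := hg x ▸ MulAction.zpow_smul_eq_iff_minimalPeriod_dvd (a := g).1 hk
    refine Subtype.ext (Equiv.ext fun y ↦ ?_)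
    exact MulAction.zpow_smul_eq_iff_minimalPeriod_dvd (a := g).2 ((hg y).symm ▸ hd)
  obtain ⟨b, hb, hbg⟩ := exists_isPairing_of_free_action hfree hα
  exact ⟨b, hb, hbg ⟨g, Subgroup.mem_zpowers g⟩⟩

theorem exists_isPairing_of_fibers {α ι : Type*} (g : Equiv.Perm α) (f : α → ι)
    (hf : ∀ x, f (g x) = f x)
    (h : ∀ i, ∃ b : {x // f x = i} → {x // f x = i}, IsPairing b ∧
      Function.Commute (g.subtypePerm fun x ↦ (by rw [hf] : f (g x) = i ↔ f x = i)) b) :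
    ∃ b : α → α, IsPairing b ∧ Function.Commute g b := by
  choose b hb hgb using h
  have hglue (i) (x : {x // f x = i}) : b (f x) ⟨x, rfl⟩ = (b i x : α) := by
    obtain ⟨x, rfl⟩ := x
    rfl
  refine ⟨fun x ↦ b (f x) ⟨x, rfl⟩, ⟨fun x ↦ ?_, fun x hx ↦ ?_⟩, fun x ↦ ?_⟩
  · rw [hglue, (hb _).involutive]
  · exact (hb _).apply_ne _ (Subtype.ext hx)
  · exact (congrArg Subtype.val (hgb (f x) ⟨x, rfl⟩)).trans (hglue (f x) ⟨g x, hf x⟩).symm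

section CycleCount

variable {α : Type*} [Fintype α] [DecidableEq α] (g : Equiv.Perm α)

theorem minimalPeriod_eq_card_support_cycleOf {x : α} (hx : x ∈ g.support) :
    minimalPeriod g x = #(g.cycleOf x).support := by
  have hcycle := g.isCycleOn_support_cycleOf x
  have hmem : x ∈ (g.cycleOf x).support := mem_support_cycleOf_iff.2 ⟨SameCycle.refl _ _, hx⟩
  refine Nat.dvd_antisymm (IsPeriodicPt.minimalPeriod_dvd ?_) ?_
  · exact (iterate_eq_pow g _ ▸ hcycle.pow_card_apply hmem : g^[_] x = x)
  · rw [← hcycle.pow_apply_eq hmem, ← iterate_eq_pow, iterate_minimalPeriod]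

theorem filter_minimalPeriod_eq_biUnion_support {d : ℕ} (hd : d ≠ 1) :
    ({x | minimalPeriod g x = d} : Finset α) =
      {c ∈ g.cycleFactorsFinset | #c.support = d}.biUnion support := by
  ext x
  simp only [mem_biUnion, mem_filter, mem_univ, true_and]
  constructor
  · rintro rfl
    have hx : x ∈ g.support :=
      mem_support.2 fun h ↦ hd (minimalPeriod_eq_one_iff_isFixedPt.2 h)
    exact ⟨g.cycleOf x, ⟨cycleOf_mem_cycleFactorsFinset_iff.2 hx,
      (minimalPeriod_eq_card_support_cycleOf g hx).symm⟩,
      mem_support_cycleOf_iff.2 ⟨SameCycle.refl _ _, hx⟩⟩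
  · rintro ⟨c, ⟨hc, rfl⟩, hx⟩
    rw [minimalPeriod_eq_card_support_cycleOf g (mem_cycleFactorsFinset_support_le hc hx),
      ← cycle_is_cycleOf hx hc]

theorem count_one_fullCycleType :
    (fullCycleType g).count 1 = Fintype.card {x // g x = x} := by
  have h : (1 : ℕ) ∉ g.cycleType := fun h ↦ (one_lt_of_mem_cycleType h).false
  simp [fullCycleType, Multiset.count_eq_zero_of_notMem h]

theorem count_fullCycleType_of_ne_one {d : ℕ} (hd : d ≠ 1) :
    (fullCycleType g).count d = #{c ∈ g.cycleFactorsFinset | #c.support = d} := by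
  rw [fullCycleType, Multiset.count_add, Multiset.count_replicate, if_neg hd.symm, add_zero,
    cycleType_def, Multiset.count_map]
  simp only [comp_apply, eq_comm (a := d)]
  rfl

theorem card_minimalPeriod_eq (d : ℕ) :
    #{x | minimalPeriod g x = d} = (fullCycleType g).count d * d := by
  rcases eq_or_ne d 1 with rfl | hd
  · simp only [minimalPeriod_eq_one_iff_isFixedPt, IsFixedPt, count_one_fullCycleType,
      Fintype.card_subtype, mul_one]
  · rw [filter_minimalPeriod_eq_biUnion_support g hd, card_biUnion,
      count_fullCycleType_of_ne_one g hd]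
    · exact sum_const_nat fun c hc ↦ (mem_filter.1 hc).2
    · exact fun c hc c' hc' hne ↦ (g.cycleFactorsFinset_pairwise_disjoint (mem_filter.1 hc).1
        (mem_filter.1 hc').1 hne).disjoint_support

theorem card_fixedPoints_pow_eq_sum_divisors {i : ℕ} (hi : i ≠ 0) :
    #{x | (g ^ i) x = x} = ∑ d ∈ i.divisors, (fullCycleType g).count d * d := by
  have hdvd (x : α) : (g ^ i) x = x ↔ minimalPeriod g x ∣ i := by
    rw [← isPeriodicPt_iff_minimalPeriod_dvd, IsPeriodicPt, IsFixedPt, iterate_eq_pow]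
  rw [card_eq_sum_card_fiberwise (f := fun x ↦ minimalPeriod g x) (t := i.divisors)
    fun x hx ↦ by simpa [hdvd, hi] using hx]
  refine sum_congr rfl fun d hd ↦ ?_
  rw [← card_minimalPeriod_eq, filter_filter]
  congr 1 with x
  simp only [mem_filter_univ, hdvd, and_iff_right_iff_imp]
  rintro rfl
  exact Nat.dvd_of_mem_divisors hd

theorem even_count_fullCycleType_of_even_card_fixedPoints_pow
    (h : ∀ i, Odd i → Even #{x | (g ^ i) x = x}) (i : ℕ) (hi : Odd i) :
    Even ((fullCycleType g).count i) := by
  induction i using Nat.strong_induction_on with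
  | _ i ih =>
    have hproper : Even (∑ d ∈ i.properDivisors, (fullCycleType g).count d * d) :=
      even_sum _ fun d hd ↦
        have ⟨hdvd, hlt⟩ := Nat.mem_properDivisors.1 hd
        (ih d hlt (hi.of_dvd_nat hdvd)).mul_right d
    have hsum := h i hi
    rw [card_fixedPoints_pow_eq_sum_divisors g hi.pos.ne',
      ← Nat.cons_self_properDivisors hi.pos.ne', sum_cons, Nat.even_add,
      iff_true_right hproper, Nat.even_mul] at hsum
    exact hsum.resolve_right (Nat.not_even_iff_odd.2 hi)

theorem exists_isPairing_of_even_count_fullCycleType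
    (h : ∀ i, Odd i → Even ((fullCycleType g).count i)) :
    ∃ b : α → α, IsPairing b ∧ Function.Commute g b := by
  have hperiod (x : α) : minimalPeriod g (g x) = minimalPeriod g x :=
    minimalPeriod_apply (g.injective.mem_periodicPts x)
  refine exists_isPairing_of_fibers g (minimalPeriod g) hperiod fun d ↦
    exists_isPairing_of_minimalPeriod_eq _ d (fun x ↦ ?_) ?_
  · refine Eq.trans (minimalPeriod_eq_minimalPeriod_iff.2 fun n ↦ ?_) x.2
    simp only [IsPeriodicPt, IsFixedPt, iterate_eq_pow, subtypePerm_pow, subtypePerm_apply,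
      Subtype.ext_iff]
  · rw [Nat.card_eq_fintype_card, Fintype.card_subtype, card_minimalPeriod_eq, Nat.even_mul]
    exact (Nat.even_or_odd d).symm.imp_left (h d)

end CycleCount


theorem even_card_iff_even_card_fixedPoints_of_involutive {α : Type*} [DecidableEq α]
    {t : α → α} (ht : Involutive t) {s : Finset α} (hs : ∀ x ∈ s, t x ∈ s) :
    Even #s ↔ Even #{x ∈ s | t x = x} := by
  have hmoved : ∑ x ∈ s with ¬t x = x, (1 : ZMod 2) = 0 :=
    sum_involution (fun x _ ↦ t x) (fun _ _ ↦ by decide) (fun x hx _ ↦ (mem_filter.1 hx).2)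
      (fun x hx ↦ by
        obtain ⟨hxs, hne⟩ := mem_filter.1 hx
        exact mem_filter.2 ⟨hs x hxs, ht.injective.ne hne⟩)
      fun x _ ↦ ht x
  rw [sum_const, nsmul_one, ZMod.natCast_eq_zero_iff_even] at hmoved
  rw [← card_filter_add_card_filter_not (s := s) (fun x ↦ t x = x), Nat.even_add,
    iff_true_right hmoved]

theorem card_fixedPoints_eq_one_of_pow {α : Type*} [Fintype α] [DecidableEq α] (g : Equiv.Perm α)
    {i : ℕ} (h : #{x | (g ^ i) x = x} = 1) : #{x | g x = x} = 1 := by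
  obtain ⟨p, hp⟩ := card_eq_one.1 h
  have hfix (x : α) : (g ^ i) x = x ↔ x = p := by simpa using Finset.ext_iff.1 hp x
  have hgp : g p = p := by
    rw [← hfix, ← mul_apply, (Commute.pow_self g i).eq, mul_apply, (hfix p).2 rfl]
  refine card_eq_one.2 ⟨p, ?_⟩
  ext x
  simp only [mem_filter_univ, mem_singleton]
  exact ⟨fun hx ↦ (hfix x).1 (pow_apply_eq_self_of_apply_eq_self hx i), fun hx ↦ hx ▸ hgp⟩

section HarmonicConj

variable {K V : Type*} [Field K] [AddCommGroup V] [Module K V] (b : Basis (Fin 2) K V)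

/-- The linear reflection fixing `b 0` and negating `b 1`. -/
noncomputable def basisReflection : V ≃ₗ[K] V :=
  reflection (x := b 1) (f := (2 : K) • b.coord 1) (by simp)

theorem basisReflection_apply_basis_zero : basisReflection b (b 0) = b 0 := by
  simp [basisReflection, reflection_apply]

theorem basisReflection_apply_basis_one : basisReflection b (b 1) = -b 1 :=
  reflection_apply_self _

theorem repr_basisReflection_zero (v : V) : b.repr (basisReflection b v) 0 = b.repr v 0 := by
  simp [basisReflection, reflection_apply]

theorem repr_basisReflection_one (v : V) : b.repr (basisReflection b v) 1 = -b.repr v 1 := by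
  simp only [basisReflection, reflection_apply, LinearMap.smul_apply, Basis.coord_apply, map_sub,
    map_smul, Basis.repr_self, Finsupp.sub_apply, Finsupp.smul_apply, Finsupp.single_eq_same,
    smul_eq_mul]
  ring

/-- Harmonic conjugation with respect to the points `[b 0]` and `[b 1]` of a projective line. -/
noncomputable def harmonicConj : ℙ K V → ℙ K V :=
  Projectivization.map (basisReflection b).toLinearMap (basisReflection b).injective

theorem involutive_harmonicConj : Involutive (harmonicConj b) := by
  intro p
  induction p using Projectivization.ind with | _ v hv =>
  simp only [harmonicConj, Projectivization.map_mk, LinearEquiv.coe_coe, basisReflection,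
    involutive_reflection _ v]

theorem mk_eq_mk_basis_iff {v : V} (hv : v ≠ 0) (i : Fin 2) :
    Projectivization.mk K v hv = Projectivization.mk K (b i) (b.ne_zero i) ↔
      b.repr v i.rev = 0 := by
  rw [Projectivization.mk_eq_mk_iff']
  refine ⟨?_, fun h ↦ ⟨b.repr v i, b.ext_elem fun j ↦ ?_⟩⟩
  · rintro ⟨a, rfl⟩
    fin_cases i <;> simp
  · fin_cases i <;> fin_cases j <;> simp_all

theorem harmonicConj_eq_self_iff (h2 : (2 : K) ≠ 0) {p : ℙ K V} :
    harmonicConj b p = p ↔ p = Projectivization.mk K (b 0) (b.ne_zero 0) ∨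
      p = Projectivization.mk K (b 1) (b.ne_zero 1) := by
  induction p using Projectivization.ind with | _ v hv =>
  have hcoord (a : K) : a • v = basisReflection b v ↔
      a * b.repr v 0 = b.repr v 0 ∧ a * b.repr v 1 = -b.repr v 1 := by
    rw [← b.repr.injective.eq_iff, Finsupp.ext_iff, Fin.forall_fin_two, repr_basisReflection_zero,
      repr_basisReflection_one, map_smul, Finsupp.smul_apply, Finsupp.smul_apply, smul_eq_mul,
      smul_eq_mul]
  rw [mk_eq_mk_basis_iff, mk_eq_mk_basis_iff, harmonicConj, Projectivization.map_mk,
    Projectivization.mk_eq_mk_iff']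
  simp only [LinearEquiv.coe_coe, hcoord]
  constructor
  · rintro ⟨a, h0, h1⟩
    have hprod : 2 * (b.repr v 0 * b.repr v 1) = 0 := by
      linear_combination b.repr v 0 * h1 - b.repr v 1 * h0
    simpa [h2, or_comm] using hprod
  · rintro (h | h)
    · exact ⟨1, by simp_all⟩
    · exact ⟨-1, by simp_all⟩

theorem commute_map_harmonicConj {τ : K →+* K} {f : V →ₛₗ[τ] V} (hf : Injective f)
    (hfix : ∀ i, Projectivization.map f hf (Projectivization.mk K (b i) (b.ne_zero i)) =
      Projectivization.mk K (b i) (b.ne_zero i)) :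
    Function.Commute (Projectivization.map f hf) (harmonicConj b) := by
  obtain ⟨a₀, h₀⟩ := (Projectivization.mk_eq_mk_iff' ..).1 (hfix 0)
  obtain ⟨a₁, h₁⟩ := (Projectivization.mk_eq_mk_iff' ..).1 (hfix 1)
  have hcomm : f.comp (basisReflection b).toLinearMap =
      (basisReflection b).toLinearMap.comp f := by
    refine b.ext (Fin.forall_fin_two.2 ⟨?_, ?_⟩)
    · simp [basisReflection_apply_basis_zero, ← h₀]
    · simp [basisReflection_apply_basis_one, ← h₁]
  intro p
  induction p using Projectivization.ind with | _ v hv =>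
  simp only [harmonicConj, Projectivization.map_mk]
  congr 1
  exact LinearMap.congr_fun hcomm v

end HarmonicConj

theorem exists_basis_mk_eq_of_ne {K V : Type*} [DivisionRing K] [AddCommGroup V] [Module K V]
    (hV : finrank K V = 2) {p q : ℙ K V} (hpq : p ≠ q) :
    ∃ b : Basis (Fin 2) K V, p = Projectivization.mk K (b 0) (b.ne_zero 0) ∧
      q = Projectivization.mk K (b 1) (b.ne_zero 1) := by
  have hli : LinearIndependent K ![p.rep, q.rep] :=
    Projectivization.linearIndependent_pair_iff_ne.2 hpq
  exact ⟨basisOfLinearIndependentOfCardEqFinrank hli (by simp [hV]), by simp⟩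

section Semilinear

variable {K V : Type*} [Field K] [AddCommGroup V] [Module K V]

/-- The maps of a projective space induced by an injective semilinear map. Bijective ones are the
elements of `PΓL(V)`. -/
def IsProjectiveSemilinear (h : ℙ K V → ℙ K V) : Prop :=
  ∃ (τ : K →+* K) (f : V →ₛₗ[τ] V) (hf : Injective f), h = Projectivization.map f hf

theorem IsProjectiveSemilinear.iterate {h : ℙ K V → ℙ K V} (hh : IsProjectiveSemilinear h) (i : ℕ) :
    IsProjectiveSemilinear h^[i] := by
  induction i with
  | zero => exact ⟨RingHom.id K, .id, injective_id, Projectivization.map_id.symm⟩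
  | succ i ih =>
    obtain ⟨σ, f, hf, rfl⟩ := hh
    obtain ⟨τ, e, he, hmap⟩ := ih
    have : RingHomCompTriple σ τ (τ.comp σ) := ⟨rfl⟩
    refine ⟨τ.comp σ, e.comp f, he.comp hf, ?_⟩
    rw [iterate_succ, hmap, Projectivization.map_comp]

theorem IsProjectiveSemilinear.even_card_fixedPoints_of_one_lt [Fintype (ℙ K V)]
    [DecidableEq (ℙ K V)] (hV : finrank K V = 2) (h2 : (2 : K) ≠ 0) {h : ℙ K V → ℙ K V}
    (hh : IsProjectiveSemilinear h)
    (hfix : 1 < #{x | h x = x}) : Even #{x | h x = x} := by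
  obtain ⟨τ, f, hf, rfl⟩ := hh
  obtain ⟨p, hp, q, hq, hpq⟩ := one_lt_card.1 hfix
  obtain ⟨b, hpb, hqb⟩ := exists_basis_mk_eq_of_ne hV hpq
  rw [mem_filter_univ] at hp hq
  have hcomm : Function.Commute (Projectivization.map f hf) (harmonicConj b) :=
    commute_map_harmonicConj b hf (Fin.forall_fin_two.2 ⟨hpb ▸ hp, hqb ▸ hq⟩)
  have hconj (x : ℙ K V) : harmonicConj b x = x ↔ x = p ∨ x = q := by
    rw [harmonicConj_eq_self_iff b h2, hpb, hqb]
  rw [even_card_iff_even_card_fixedPoints_of_involutive (involutive_harmonicConj b)]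
  · have hpair : ({x ∈ {x | Projectivization.map f hf x = x} | harmonicConj b x = x} : Finset _) =
        {p, q} := by
      ext x
      simp only [mem_filter, mem_univ, true_and, hconj, mem_insert, mem_singleton,
        and_iff_right_iff_imp]
      rintro (rfl | rfl) <;> assumption
    rw [hpair, card_pair hpq]
    exact even_two
  · intro x hx
    rw [mem_filter_univ] at hx ⊢
    rw [hcomm x, hx]

theorem IsProjectiveSemilinear.even_card_fixedPoints_pow [Fintype (ℙ K V)] [DecidableEq (ℙ K V)]
    (hV : finrank K V = 2) (h2 : (2 : K) ≠ 0) {g : Equiv.Perm (ℙ K V)}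
    (hg : IsProjectiveSemilinear g) (hfix : Even #{x | g x = x}) (i : ℕ) :
    Even #{x | (g ^ i) x = x} := by
  rcases lt_trichotomy #{x | (g ^ i) x = x} 1 with h | h | h
  · simp [Nat.lt_one_iff.1 h]
  · rw [card_fixedPoints_eq_one_of_pow g h] at hfix
    exact absurd hfix Nat.not_even_one
  · exact (iterate_eq_pow g i ▸ hg.iterate i).even_card_fixedPoints_of_one_lt hV h2 h

end Semilinear

/-- The semilinear map `v ↦ A · σ(v)`, with `σ` applied to each coordinate. -/
def semilinearMulVec {ι R : Type*} [Fintype ι] [CommSemiring R] (A : Matrix ι ι R)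
    (σ : R →+* R) : (ι → R) →ₛₗ[σ] ι → R where
  toFun v := A *ᵥ (σ ∘ v)
  map_add' v w := by rw [← Matrix.mulVec_add]; congr 1; ext; simp
  map_smul' c v := by rw [← Matrix.mulVec_smul]; congr 1; ext; simp

theorem semilinearMulVec_injective {ι K : Type*} [Fintype ι] [DecidableEq ι] [Field K]
    (A : GL ι K) (σ : K →+* K) : Injective (semilinearMulVec (A : Matrix ι ι K) σ) :=
  (Matrix.mulVec_injective_of_isUnit A.isUnit).comp σ.injective.comp_left

theorem isProjectiveSemilinear_of_mk_eq {ι K : Type*} [Fintype ι] [DecidableEq ι] [Field K]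
    (A : GL ι K) (σ : K →+* K) {h : ℙ K (ι → K) → ℙ K (ι → K)}
    (hh : ∀ v hv hw, h (.mk K v hv) = .mk K ((A : Matrix ι ι K) *ᵥ (σ ∘ v)) hw) :
    IsProjectiveSemilinear h := by
  refine ⟨σ, semilinearMulVec A σ, semilinearMulVec_injective A σ, funext fun p ↦ ?_⟩
  induction p using Projectivization.ind with | _ v hv => exact hh v hv _

theorem two_ne_zero_of_odd_card {K : Type*} [Field K] [Fintype K] (h : Odd (Fintype.card K)) :
    (2 : K) ≠ 0 :=
  Ring.two_ne_zero fun hchar ↦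
    Nat.not_even_iff_odd.2 h (Nat.even_iff.2 (FiniteField.even_card_iff_char_two.1 hchar))

/-- Let `n` be even with `n - 1` a prime power, and let `g ∈ PΓL(2, n-1)` act on the
projective line over `F = F_{n-1}` (so `g` is induced by `v ↦ A · σ(v)` with
`A ∈ GL(2, F)` and `σ` a field automorphism). If `g` has an even number of fixed points,
then for every odd `i` the number of `i`-cycles of `g` is even; in particular `g`
preserves a partition of the `n` points into `n/2` blocks of size `2`, i.e. commutes
with a fixed-point-free involution. -/
theorem pgammal_even_fixed_points (n : ℕ) (hn : Even n) (F : Type*) [Field F] [Fintype F]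
    [DecidableEq F] (hF : Fintype.card F = n - 1)
    [Fintype (Projectivization F (Fin 2 → F))] [DecidableEq (Projectivization F (Fin 2 → F))]
    (hP : Fintype.card (Projectivization F (Fin 2 → F)) = n)
    (σ : F ≃+* F) (A : GL (Fin 2) F) (g : Equiv.Perm (Projectivization F (Fin 2 → F)))
    (hg : ∀ (v : Fin 2 → F) (hv : v ≠ 0)
      (hw : Matrix.mulVec (A : Matrix (Fin 2) (Fin 2) F) (fun j => σ (v j)) ≠ 0),
      g (Projectivization.mk F v hv) =
        Projectivization.mk F (Matrix.mulVec (A : Matrix (Fin 2) (Fin 2) F)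
          (fun j => σ (v j))) hw)
    (hfix : Even (Fintype.card {x // g x = x})) :
    (∀ i, Odd i → Even (Multiset.count i (fullCycleType g))) ∧
    ∃ b : Equiv.Perm (Projectivization F (Fin 2 → F)),
      (∀ x, b (b x) = x) ∧ (∀ x, b x ≠ x) ∧ (∀ x, g (b x) = b (g x)) := by
  have h2 : (2 : F) ≠ 0 := by
    have hcard : 1 < Fintype.card F := Fintype.one_lt_card
    exact two_ne_zero_of_odd_card (hF ▸ Nat.Even.sub_odd (by lia) hn odd_one)
  have hsemilinear : IsProjectiveSemilinear g := isProjectiveSemilinear_of_mk_eq A σ hg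
  rw [Fintype.card_subtype] at hfix
  have hpow (i : ℕ) : Even #{x | (g ^ i) x = x} :=
    hsemilinear.even_card_fixedPoints_pow (by simp) h2 hfix i
  have hcount := even_count_fullCycleType_of_even_card_fixedPoints_pow g fun i _ ↦ hpow i
  obtain ⟨b, hb, hgb⟩ := exists_isPairing_of_even_count_fullCycleType g hcount
  exact ⟨hcount, hb.involutive.toPerm b, hb.involutive, hb.apply_ne, hgb⟩
end

section
/- Let n ≥ 5 and let x be an element of S_n whose cycle type is (i, i, n - 2i) with n odd, 2 ≤ i ≤ (n-3)/2, and gcd(i, n) = 1. Then x^i is a cycle of length n - 2i fixing 2i ≥ 4 points; consequently, by Jordan's theorem (a primitive group of degree n containing a cycle fixing at least 3 points contains A_n), x is not contained in any primitive subgroup of S_n other than A_n and S_n. -/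
/-- A subgroup of `S_n` is primitive if it is transitive and all its blocks are trivial. -/
def IsPrimitiveSubgroup {n : ℕ} (G : Subgroup (Equiv.Perm (Fin n))) : Prop :=
  MulAction.IsPretransitive G (Fin n) ∧
    ∀ B : Set (Fin n), MulAction.IsBlock G B → B.Subsingleton ∨ B = Set.univ

/-!
Write `x = c * τ` with `c` the `(n - 2i)`-cycle. Then `x ^ i = c ^ i` is again an `(n - 2i)`-cycle,
and `x ^ (n - 2i) = τ ^ (n - 2i)` is a nontrivial permutation disjoint from it.

Marggraf's theorem says that a primitive group containing a cycle with `k` fixed points is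
`(k + 1)`-transitive. Two-transitivity is a classical theorem of Jordan, and induction on `k`
reduces the rest to the primitivity of a point stabilizer `G_a`. The translates of a nontrivial
block of `G_a` define a `G`-equivariant family of equivalence relations, one on the complement of
each point, and a cycle with at least two fixed points leaves only the trivial and the total family.

Of the two disjoint elements, the one with smaller support has so few moved points that
multiple transitivity provides a conjugate meeting it in exactly one point. The commutator of the
two is a 3-cycle, and a primitive group containing a 3-cycle contains the alternating group.
-/

open scoped Pointwise
open MulAction

lemma class_eq_of_nonempty_inter {α : Type*} {r : Setoid α} {u v : α}
    (h : ({w | r u w} ∩ {w | r v w}).Nonempty) : {w | r u w} = {w | r v w} := by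
  obtain ⟨w, hu, hv⟩ := h
  have huv : r u v := r.trans' hu (r.symm' hv)
  ext x
  exact ⟨r.trans' (r.symm' huv), r.trans' huv⟩

section EquivariantFamily

variable {G α : Type*} [Group G] [MulAction G α]

/-- An equivariant family of equivalence relations: each point `a` carries a relation `R a`,
transported by the action, in which `a` is equivalent only to itself. -/
structure IsEquivariantFamily (G : Type*) {α : Type*} [Group G] [MulAction G α]
    (R : α → Setoid α) : Prop where
  smul : ∀ (g : G) {a u v : α}, R a u v → R (g • a) (g • u) (g • v)
  eq_of_rel : ∀ {a v : α}, R a a v → v = a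

/-- A family of equivalence relations is coarsest if each `R a` has at most the two classes `{a}`
and its complement. -/
def IsCoarsest (R : α → Setoid α) : Prop :=
  ∀ ⦃a u v : α⦄, u ≠ a → v ≠ a → R a u v

namespace IsEquivariantFamily

variable {R : α → Setoid α}

lemma smul_iff (hR : IsEquivariantFamily G R) (g : G) {a u v : α} :
    R (g • a) (g • u) v ↔ R a u (g⁻¹ • v) :=
  ⟨fun h ↦ inv_smul_smul g a ▸ inv_smul_smul g u ▸ hR.smul g⁻¹ h,
    fun h ↦ smul_inv_smul g v ▸ hR.smul g h⟩

lemma ne_of_rel (hR : IsEquivariantFamily G R) {a u v : α} (h : R a u v) (hu : u ≠ a) : v ≠ a := by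
  rintro rfl
  exact hu (hR.eq_of_rel ((R v).symm' h))

lemma ne_base_of_rel (hR : IsEquivariantFamily G R) {a u v : α} (h : R a u v) (huv : u ≠ v) :
    u ≠ a := by
  rintro rfl
  exact huv (hR.eq_of_rel h).symm

lemma smul_class (hR : IsEquivariantFamily G R) (g : G) (a u : α) :
    g • {v | R a u v} = {v | R (g • a) (g • u) v} := by
  ext v
  exact Set.mem_smul_set_iff_inv_smul_mem.trans (hR.smul_iff g).symm

lemma ncard_class_eq [IsMultiplyPretransitive G α 2] (hR : IsEquivariantFamily G R)
    {a u b v : α} (hu : u ≠ a) (hv : v ≠ b) :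
    {w | R a u w}.ncard = {w | R b v w}.ncard := by
  obtain ⟨g, rfl, rfl⟩ := is_two_pretransitive_iff.1 ‹IsMultiplyPretransitive G α 2› hu.symm hv.symm
  rw [← hR.smul_class, Set.ncard_smul_set]

end IsEquivariantFamily

/-- The family of equivalence relations attached to a set `D`: `u` and `v` are linked off `a` if
they are joined by a chain of translates of `D` that avoid `a`. -/
def linkedOff (G : Type*) {α : Type*} [Group G] [MulAction G α] (D : Set α) (a : α) : Setoid α :=
  Relation.EqvGen.setoid fun u v ↦ ∃ g : G, u ∈ g • D ∧ v ∈ g • D ∧ a ∉ g • D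

lemma linkedOff_of_mem {D : Set α} {a u v : α} (g : G) (hu : u ∈ g • D) (hv : v ∈ g • D)
    (ha : a ∉ g • D) : linkedOff G D a u v :=
  .rel _ _ ⟨g, hu, hv, ha⟩

lemma isEquivariantFamily_linkedOff (D : Set α) : IsEquivariantFamily G (linkedOff G D) where
  smul g a u v h := by
    induction h with
    | rel u v h =>
      obtain ⟨k, hu, hv, ha⟩ := h
      refine linkedOff_of_mem (g * k) ?_ ?_ ?_ <;> rwa [mul_smul, Set.smul_mem_smul_set_iff]
    | refl u => exact (linkedOff G D _).refl' _
    | symm u v _ ih => exact (linkedOff G D _).symm' ih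
    | trans u v w _ _ ih₁ ih₂ => exact (linkedOff G D _).trans' ih₁ ih₂
  eq_of_rel {a v} h := by
    suffices ∀ u v, linkedOff G D a u v → (u = a ↔ v = a) from (this a v h).1 rfl
    intro u v h
    induction h with
    | rel u v h =>
      obtain ⟨g, hu, hv, ha⟩ := h
      exact iff_of_false (ne_of_mem_of_not_mem hu ha) (ne_of_mem_of_not_mem hv ha)
    | refl u => rfl
    | symm u v _ ih => exact ih.symm
    | trans u v w _ _ ih₁ ih₂ => exact ih₁.trans ih₂

lemma linkedOff_class_subset {D : Set α} {a b u : α} (hb : ¬ linkedOff G D a u b) :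
    {v | linkedOff G D a u v} ⊆ {v | linkedOff G D b u v} := by
  suffices ∀ v w, linkedOff G D a v w → linkedOff G D a u v → linkedOff G D b v w from
    fun w hw ↦ this u w hw ((linkedOff G D a).refl' u)
  intro v w h
  induction h with
  | rel v w h =>
    obtain ⟨g, hv, hw, ha⟩ := h
    intro huv
    exact linkedOff_of_mem g hv hw fun hbg ↦
      hb ((linkedOff G D a).trans' huv (linkedOff_of_mem g hv hbg ha))
  | refl v => exact fun _ ↦ (linkedOff G D b).refl' v
  | symm v w h ih =>
    exact fun huw ↦ (linkedOff G D b).symm'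
      (ih ((linkedOff G D a).trans' huw ((linkedOff G D a).symm' h)))
  | trans v w x h _ ih₁ ih₂ =>
    exact fun huv ↦ (linkedOff G D b).trans' (ih₁ huv) (ih₂ ((linkedOff G D a).trans' huv h))

lemma linkedOff_class_eq [Finite α] [IsMultiplyPretransitive G α 2] {D : Set α} {a b u : α}
    (hu : u ≠ a) (hb : ¬ linkedOff G D a u b) :
    {v | linkedOff G D a u v} = {v | linkedOff G D b u v} := by
  have hub : u ≠ b := by
    rintro rfl
    exact hb ((linkedOff G D a).refl' u)
  exact Set.eq_of_subset_of_ncard_le (linkedOff_class_subset hb)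
    ((isEquivariantFamily_linkedOff D).ncard_class_eq hub hu).le

lemma isBlock_linkedOff_class [Finite α] [IsMultiplyPretransitive G α 2] {D : Set α} {a u : α}
    (hu : u ≠ a) (hcard : 2 * {v | linkedOff G D a u v}.ncard < Nat.card α) :
    IsBlock G {v | linkedOff G D a u v} := by
  rw [isBlock_iff_smul_eq_of_nonempty]
  intro g hne
  -- two classes do not cover `α`, and both are classes for any point that they miss
  obtain ⟨b, hb⟩ : ∃ b, b ∉ g • {v | linkedOff G D a u v} ∪ {v | linkedOff G D a u v} := by
    rw [← Set.ne_univ_iff_exists_notMem]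
    intro h
    have := Set.ncard_union_le (g • {v | linkedOff G D a u v}) {v | linkedOff G D a u v}
    rw [h, Set.ncard_univ, Set.ncard_smul_set] at this
    lia
  rw [Set.mem_union, not_or, (isEquivariantFamily_linkedOff D).smul_class] at hb
  rw [(isEquivariantFamily_linkedOff D).smul_class] at hne ⊢
  rw [linkedOff_class_eq ((MulAction.injective g).ne hu) hb.1, linkedOff_class_eq hu hb.2] at hne ⊢
  exact class_eq_of_nonempty_inter hne

lemma IsEquivariantFamily.two_mul_ncard_class_lt [Finite α] [IsMultiplyPretransitive G α 2]
    {R : α → Setoid α} (hR : IsEquivariantFamily G R) (hR' : ¬ IsCoarsest R)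
    {a u : α} (hu : u ≠ a) : 2 * {w | R a u w}.ncard < Nat.card α := by
  obtain ⟨b, v, w, hv, hw, hvw⟩ : ∃ b v w, v ≠ b ∧ w ≠ b ∧ ¬ R b v w := by
    simpa [IsCoarsest] using hR'
  have hdisj : Disjoint {x | R b v x} {x | R b w x} :=
    Set.disjoint_left.2 fun x hvx hwx ↦ hvw ((R b).trans' hvx ((R b).symm' hwx))
  have hb : b ∉ {x | R b v x} ∪ {x | R b w x} := by
    rintro (h | h)
    · exact hR.ne_of_rel h hv rfl
    · exact hR.ne_of_rel h hw rfl
  have hlt := Set.ncard_lt_card (Set.ne_univ_iff_exists_notMem _ |>.2 ⟨b, hb⟩)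
  rw [Set.ncard_union_eq hdisj, hR.ncard_class_eq hv hu, hR.ncard_class_eq hw hu] at hlt
  lia

theorem isCoarsest_linkedOff [Finite α] [IsPreprimitive G α] [IsMultiplyPretransitive G α 2]
    {D : Set α} (hD : D.Nontrivial) (hD' : D ≠ Set.univ) : IsCoarsest (linkedOff G D) := by
  by_contra hnot
  obtain ⟨a, ha⟩ := (Set.ne_univ_iff_exists_notMem D).1 hD'
  obtain ⟨d, hd, e, he, hde⟩ := hD
  have hda : d ≠ a := ne_of_mem_of_not_mem hd ha
  have hL := isEquivariantFamily_linkedOff (G := G) D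
  have hblock := isBlock_linkedOff_class hda (hL.two_mul_ncard_class_lt hnot hda)
  rcases IsPreprimitive.isTrivialBlock_of_isBlock hblock with hsub | huniv
  · have hlink : linkedOff G D a d e := linkedOff_of_mem 1 (by simpa) (by simpa) (by simpa)
    exact hde (hsub ((linkedOff G D a).refl' d) hlink)
  · exact hL.ne_of_rel (Set.eq_univ_iff_forall.1 huniv a) hda rfl

theorem IsEquivariantFamily.isCoarsest_of_forall_notMem [Finite α] [IsPreprimitive G α]
    [IsMultiplyPretransitive G α 2] {R : α → Setoid α} (hR : IsEquivariantFamily G R)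
    {D : Set α} (hD : D.Nontrivial) (hD' : D ≠ Set.univ)
    (h : ∀ a ∉ D, ∀ u ∈ D, ∀ v ∈ D, R a u v) : IsCoarsest R := by
  intro a u v hu hv
  induction isCoarsest_linkedOff (G := G) hD hD' hu hv with
  | rel u v huv =>
    obtain ⟨g, ⟨u, huD, rfl⟩, ⟨v, hvD, rfl⟩, ha⟩ := huv
    rw [Set.mem_smul_set_iff_inv_smul_mem] at ha
    exact smul_inv_smul g a ▸ hR.smul g (h _ ha u huD v hvD)
  | refl u => exact (R a).refl' u
  | symm u v _ ih => exact (R a).symm' (ih hv hu)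
  | trans u v w huv _ ih₁ ih₂ =>
    have hv' := (isEquivariantFamily_linkedOff D).ne_of_rel huv hu
    exact (R a).trans' (ih₁ hu hv') (ih₂ hv' hv)

end EquivariantFamily

section Cyclic

variable {Z X : Type*} [Group Z] [IsCyclic Z] [MulAction Z X]

lemma eq_of_index_eq_of_isCyclic {H K : Subgroup Z} (h : H.index = K.index) : H = K := by
  obtain ⟨z, hz⟩ := IsCyclic.exists_generator (α := Z)
  let _ : CommGroup Z := IsCyclic.commGroup
  have mem_iff (L : Subgroup Z) (j : ℤ) : z ^ j ∈ L ↔ (L.index : ℤ) ∣ j := by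
    have hgen : ∀ w : Z ⧸ L, w ∈ Subgroup.zpowers (z : Z ⧸ L) := by
      rintro ⟨w⟩
      obtain ⟨k, rfl⟩ := hz w
      exact ⟨k, rfl⟩
    rw [Subgroup.index, ← orderOf_eq_card_of_forall_mem_zpowers hgen, orderOf_dvd_iff_zpow_eq_one,
      ← QuotientGroup.mk_zpow, QuotientGroup.eq_one_iff]
  ext w
  obtain ⟨j, rfl⟩ := hz w
  rw [mem_iff H, mem_iff K, h]

lemma isBlock_eq_of_ncard_eq_of_isCyclic [Finite X] [IsPretransitive Z X] {B C : Set X}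
    (hB : IsBlock Z B) (hC : IsBlock Z C) {x : X} (hxB : x ∈ B) (hxC : x ∈ C)
    (hcard : B.ncard = C.ncard) : B = C := by
  have hindex : (stabilizer Z B).index = (stabilizer Z C).index := by
    rw [index_stabilizer, index_stabilizer]
    refine Nat.eq_of_mul_eq_mul_left ((Set.ncard_pos B.toFinite).2 ⟨x, hxB⟩) ?_
    rw [hB.ncard_block_mul_ncard_orbit_eq ⟨x, hxB⟩, hcard,
      hC.ncard_block_mul_ncard_orbit_eq ⟨x, hxC⟩]
  rw [← hB.orbit_stabilizer_eq hxB, ← hC.orbit_stabilizer_eq hxC, eq_of_index_eq_of_isCyclic hindex]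

lemma isBlock_eq_of_subset_orbit_of_isCyclic {x : X} [Finite (orbit Z x)] {B C : Set X}
    (hB : IsBlock Z B) (hC : IsBlock Z C) (hBx : B ⊆ orbit Z x) (hCx : C ⊆ orbit Z x)
    (hxB : x ∈ B) (hxC : x ∈ C) (hcard : B.ncard = C.ncard) : B = C := by
  let ι : ↥(orbit Z x) →[Z] X := ⟨Subtype.val, fun _ _ ↦ rfl⟩
  have himage {D : Set X} (hD : D ⊆ orbit Z x) : Subtype.val '' (ι ⁻¹' D) = D :=
    Subtype.coe_image_of_subset hD
  have hncard {D : Set X} (hD : D ⊆ orbit Z x) : (ι ⁻¹' D).ncard = D.ncard := by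
    rw [← Set.ncard_image_of_injective _ Subtype.val_injective, himage hD]
  rw [← himage hBx, ← himage hCx, isBlock_eq_of_ncard_eq_of_isCyclic (hB.preimage ι)
    (hC.preimage ι) (x := ⟨x, mem_orbit_self x⟩) hxB hxC (by rw [hncard hBx, hncard hCx, hcard])]

end Cyclic

section Cycle

variable {G α : Type*} [Group G] [MulAction G α] {c : G}

lemma compl_fixedBy_subset_orbit_zpowers (hc : (toPerm c : Equiv.Perm α).IsCycle) {x : α}
    (hx : x ∉ fixedBy α c) : (fixedBy α c)ᶜ ⊆ orbit (Subgroup.zpowers c) x := by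
  intro y hy
  obtain ⟨j, rfl⟩ := hc.exists_zpow_eq hx hy
  exact ⟨⟨c ^ j, j, rfl⟩, congrArg (· x) (map_zpow (toPermHom G α) c j)⟩

lemma nontrivial_compl_fixedBy (hc : (toPerm c : Equiv.Perm α).IsCycle) :
    (fixedBy α c)ᶜ.Nontrivial := by
  obtain ⟨x, hx, -⟩ := hc
  exact ⟨c • x, fun h ↦ hx (MulAction.injective c h), x, hx, hx⟩

variable {R : α → Setoid α}

lemma IsEquivariantFamily.subgroup (hR : IsEquivariantFamily G R) (H : Subgroup G) :
    IsEquivariantFamily H R where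
  smul g := hR.smul g.1
  eq_of_rel := hR.eq_of_rel

lemma IsEquivariantFamily.isBlock_class (hR : IsEquivariantFamily G R) {a : α}
    (ha : a ∈ fixedPoints G α) (u : α) : IsBlock G {v | R a u v} := by
  rw [isBlock_iff_smul_eq_of_nonempty]
  intro g hne
  rw [hR.smul_class, ha g] at hne ⊢
  exact class_eq_of_nonempty_inter hne

lemma IsEquivariantFamily.rel_of_fixed_of_moved (hR : IsEquivariantFamily G R)
    (hc : (toPerm c : Equiv.Perm α).IsCycle) {a x y z : α} (ha : a ∈ fixedBy α c)
    (hx : x ∈ fixedBy α c) (hy : y ∉ fixedBy α c) (hz : z ∉ fixedBy α c) (h : R a x y) :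
    R a x z := by
  obtain ⟨⟨_, j, rfl⟩, rfl⟩ := compl_fixedBy_subset_orbit_zpowers hc hy hz
  have := hR.smul (c ^ j) h
  rwa [mem_fixedBy_zpow ha j, mem_fixedBy_zpow hx j] at this

/-- A class meeting both the fixed and the moved points of `c` contains all moved points, so the
classes are too large to consist of fixed points only. -/
lemma IsEquivariantFamily.isCoarsest_of_rel_fixed_moved [Finite α] [IsPreprimitive G α]
    [IsMultiplyPretransitive G α 2] (hR : IsEquivariantFamily G R)
    (hc : (toPerm c : Equiv.Perm α).IsCycle) {a x y : α} (ha : a ∈ fixedBy α c)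
    (hx : x ∈ fixedBy α c) (hy : y ∉ fixedBy α c) (h : R a x y) : IsCoarsest R := by
  have hxa : x ≠ a := by
    rintro rfl
    exact hy (hR.eq_of_rel h ▸ hx)
  refine hR.isCoarsest_of_forall_notMem (nontrivial_compl_fixedBy hc)
    (Set.ne_univ_iff_exists_notMem _ |>.2 ⟨a, not_not_intro ha⟩) fun b hb u hu v hv ↦ ?_
  rw [Set.notMem_compl_iff] at hb
  have hub : u ≠ b := ne_of_mem_of_not_mem hb hu |>.symm
  obtain ⟨z, huz, hz⟩ : ∃ z, R b u z ∧ z ∈ fixedBy α c := by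
    by_contra! hmoved
    have hsub : insert x (fixedBy α c)ᶜ ⊆ {w | R a x w} := Set.insert_subset ((R a).refl' x)
      fun w hw ↦ hR.rel_of_fixed_of_moved hc ha hx hy hw h
    have hle := Set.ncard_le_ncard hsub
    rw [Set.ncard_insert_of_notMem (not_not_intro hx), hR.ncard_class_eq hxa hub] at hle
    have := Set.ncard_le_ncard (show {w | R b u w} ⊆ (fixedBy α c)ᶜ from hmoved)
    lia
  exact (R b).trans' huz (hR.rel_of_fixed_of_moved hc hb hz hu hv ((R b).symm' huz))

lemma IsEquivariantFamily.class_eq_of_fixed [Finite α] [IsMultiplyPretransitive G α 2]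
    (hR : IsEquivariantFamily G R) (hc : (toPerm c : Equiv.Perm α).IsCycle) {d : α}
    (hd : d ∉ fixedBy α c) (hmoved : ∀ a ∈ fixedBy α c, {v | R a d v} ⊆ (fixedBy α c)ᶜ)
    {a b : α} (ha : a ∈ fixedBy α c) (hb : b ∈ fixedBy α c) :
    {v | R a d v} = {v | R b d v} := by
  have hblock {e : α} (he : e ∈ fixedBy α c) : IsBlock (Subgroup.zpowers c) {v | R e d v} := by
    refine (hR.subgroup _).isBlock_class ?_ d
    rintro ⟨_, j, rfl⟩
    exact mem_fixedBy_zpow he j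
  have horbit := compl_fixedBy_subset_orbit_zpowers hc hd
  exact isBlock_eq_of_subset_orbit_of_isCyclic (hblock ha) (hblock hb)
    ((hmoved a ha).trans horbit) ((hmoved b hb).trans horbit) ((R a).refl' d) ((R b).refl' d)
    (hR.ncard_class_eq (ne_of_mem_of_not_mem ha hd).symm (ne_of_mem_of_not_mem hb hd).symm)

/-- The dual of a family `R`: the roles of the base point and of the point whose class is taken
are exchanged, so that `dualFamily R u` identifies the base points, other than `u`, for which `u`
has the same class. The condition `a ≠ u` isolates `u`. -/
def dualFamily (R : α → Setoid α) (u : α) : Setoid α :=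
  Setoid.ker fun a ↦ {v | a ≠ u ∧ R a u v}

lemma dualFamily_iff {a b u : α} (ha : a ≠ u) (hb : b ≠ u) :
    dualFamily R u a b ↔ {v | R a u v} = {v | R b u v} := by
  rw [dualFamily, Setoid.ker_def]
  simp only [ne_eq, ha, hb, not_false_eq_true, true_and]

lemma IsEquivariantFamily.dual (hR : IsEquivariantFamily G R) :
    IsEquivariantFamily G (dualFamily R) where
  smul g {u a b} h := by
    rw [dualFamily, Setoid.ker_def] at h ⊢
    ext v
    simpa only [Set.mem_ofPred_eq, (MulAction.injective g).ne_iff, hR.smul_iff] using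
      Set.ext_iff.1 h (g⁻¹ • v)
  eq_of_rel {u v} h := by
    by_contra hv
    have hu : u ∈ {w | v ≠ u ∧ R v u w} := ⟨hv, (R v).refl' u⟩
    rw [← Setoid.ker_def.1 h] at hu
    exact hu.1 rfl

lemma IsEquivariantFamily.not_isCoarsest_dualFamily (hR : IsEquivariantFamily G R) {a u v : α}
    (h : R a u v) (huv : u ≠ v) : ¬ IsCoarsest (dualFamily R) := by
  intro hdual
  have hau : a ≠ u := (hR.ne_base_of_rel h huv).symm
  have heq := (dualFamily_iff hau huv.symm).1 (hdual hau huv.symm)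
  have hv : R v u v := heq.subset h
  exact huv (hR.eq_of_rel ((R v).symm' hv))

theorem IsEquivariantFamily.isCoarsest_of_isCycle [Finite α] [IsPreprimitive G α]
    [IsMultiplyPretransitive G α 2] (hR : IsEquivariantFamily G R)
    (hc : (toPerm c : Equiv.Perm α).IsCycle) (hfix : (fixedBy α c).Nontrivial) {a u v : α}
    (h : R a u v) (huv : u ≠ v) : IsCoarsest R := by
  by_contra hnot
  obtain ⟨p, hp, q, hq, hpq⟩ := hfix
  obtain ⟨d, hd⟩ := (nontrivial_compl_fixedBy hc).nonempty
  have hne {b : α} (hb : b ∈ fixedBy α c) : b ≠ d := ne_of_mem_of_not_mem hb hd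
  have hmoved : ∀ b ∈ fixedBy α c, {w | R b d w} ⊆ (fixedBy α c)ᶜ := fun b hb w hw hwc ↦
    hnot (hR.isCoarsest_of_rel_fixed_moved hc hb hwc hd ((R b).symm' hw))
  have hlarge : fixedBy α c ⊆ {w | dualFamily R d p w} := fun w hw ↦
    (dualFamily_iff (hne hp) (hne hw)).2 (hR.class_eq_of_fixed hc hd hmoved hp hw)
  have hsmall : {w | dualFamily R q p w} ⊆ fixedBy α c \ {q} := fun w hw ↦
    ⟨by_contra fun hwc ↦ hR.not_isCoarsest_dualFamily h huv
      (hR.dual.isCoarsest_of_rel_fixed_moved hc hq hp hwc hw), hR.dual.ne_of_rel hw hpq⟩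
  have := Set.ncard_le_ncard hlarge
  have := Set.ncard_le_ncard hsmall
  have := Set.ncard_sdiff_singleton_lt_of_mem hq
  have := hR.dual.ncard_class_eq (hne hp) hpq
  lia

/-- The family of translates of a set `B` seen from the point `a`: two points are equivalent at `b`
if they lie in the same translates `g • B` among those with `g • a = b`. -/
def translateFamily (G : Type*) {α : Type*} [Group G] [MulAction G α] (a : α) (B : Set α) (b : α) :
    Setoid α :=
  Setoid.ker fun u ↦ {g : G | g • a = b ∧ u ∈ g • B}

lemma isEquivariantFamily_translateFamily [IsMultiplyPretransitive G α 2] {a : α} {B : Set α}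
    (hB : B.Nonempty) (ha : a ∉ B) : IsEquivariantFamily G (translateFamily G a B) where
  smul k {b u v} h := by
    rw [translateFamily, Setoid.ker_def] at h ⊢
    ext g
    simpa only [Set.mem_ofPred_eq, mul_smul, inv_smul_eq_iff, Set.mem_smul_set_iff_inv_smul_mem,
      mul_inv_rev, inv_inv] using Set.ext_iff.1 h (k⁻¹ * g)
  eq_of_rel {b v} h := by
    by_contra hvb
    obtain ⟨e, he⟩ := hB
    obtain ⟨g, hga, hge⟩ := is_two_pretransitive_iff.1 ‹IsMultiplyPretransitive G α 2›
      (ne_of_mem_of_not_mem he ha).symm (Ne.symm hvb)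
    have hg : g ∈ {g : G | g • a = b ∧ v ∈ g • B} := ⟨hga, hge ▸ Set.smul_mem_smul_set he⟩
    rw [← Setoid.ker_def.1 h] at hg
    exact ha (Set.smul_mem_smul_set_iff.1 (hga ▸ hg.2))

lemma translateFamily_self_iff {a u v : α} {B : Set α} (hB : IsBlock (stabilizer G a) B)
    (hu : u ∈ B) : translateFamily G a B a u v ↔ v ∈ B := by
  rw [translateFamily, Setoid.ker_def]
  constructor
  · intro h
    have h1 : (1 : G) ∈ {g : G | g • a = a ∧ u ∈ g • B} := ⟨one_smul G a, by rwa [one_smul]⟩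
    rw [h] at h1
    simpa using h1.2
  · intro hv
    ext g
    refine and_congr_right fun hga ↦ ?_
    have hmem {w : α} (hw : w ∈ B) : w ∈ g • B ↔ g • B = B :=
      ⟨fun h ↦ isBlock_iff_smul_eq_of_nonempty.1 hB (g := ⟨g, hga⟩) ⟨w, h, hw⟩, fun h ↦ by rwa [h]⟩
    exact (hmem hu).trans (hmem hv).symm

theorem isPreprimitive_stabilizer_of_isCycle [Finite α] [IsPreprimitive G α]
    [IsMultiplyPretransitive G α 2] (hc : (toPerm c : Equiv.Perm α).IsCycle)
    (hfix : (fixedBy α c).Nontrivial) (a : α) :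
    IsPreprimitive (stabilizer G a) (SubMulAction.ofStabilizer G a) := by
  have htrans : IsPretransitive (stabilizer G a) (SubMulAction.ofStabilizer G a) := by
    rw [← is_one_pretransitive_iff, ← SubMulAction.ofStabilizer.isMultiplyPretransitive]
    infer_instance
  refine { isTrivialBlock_of_isBlock := fun {B} hB ↦ or_iff_not_imp_left.2 fun hne ↦ ?_ }
  obtain ⟨u, hu, v, hv, huv⟩ := Set.not_subsingleton_iff.1 hne
  have hB' := isBlock_subtypeVal.2 hB
  have huB := Set.mem_image_of_mem Subtype.val hu
  have haB : a ∉ (Subtype.val '' B : Set α) := by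
    rintro ⟨w, -, hw⟩
    exact w.2 hw
  have hfam := isEquivariantFamily_translateFamily (G := G) ⟨_, huB⟩ haB
  have hcoarsest := hfam.isCoarsest_of_isCycle hc hfix
    ((translateFamily_self_iff hB' huB).2 (Set.mem_image_of_mem _ hv))
    (Subtype.val_injective.ne huv)
  refine Set.eq_univ_of_forall fun w ↦ ?_
  have hw := (translateFamily_self_iff hB' huB).1 (hcoarsest u.2 w.2)
  exact (Subtype.val_injective.mem_set_image).1 hw

lemma is_two_pretransitive_of_isCycle [Finite α] [IsPreprimitive G α]
    (hc : (toPerm c : Equiv.Perm α).IsCycle) (hfix : (fixedBy α c).Nonempty) :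
    IsMultiplyPretransitive G α 2 := by
  obtain ⟨k, hk⟩ := Nat.exists_eq_add_of_lt ((Set.ncard_pos (Set.toFinite _)).2 hfix)
  have hcard := Set.ncard_add_ncard_compl (fixedBy α c)
  have hmoved := Set.one_lt_ncard_iff_nontrivial.2 (nontrivial_compl_fixedBy hc)
  refine IsPreprimitive.is_two_pretransitive ‹_› (n := k) (s := fixedBy α c) (by lia) (by lia)
    ⟨fun x y ↦ ?_⟩
  obtain ⟨⟨g, hg⟩, hgy⟩ := compl_fixedBy_subset_orbit_zpowers hc x.2 y.2
  refine ⟨⟨g, ?_⟩, Subtype.ext hgy⟩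
  obtain ⟨j, rfl⟩ := hg
  rw [mem_fixingSubgroup_iff]
  exact fun z hz ↦ mem_fixedBy_zpow hz j

lemma isCycle_toPerm_stabilizer (hc : (toPerm c : Equiv.Perm α).IsCycle) {a : α}
    (ha : c ∈ stabilizer G a) :
    (toPerm (⟨c, ha⟩ : stabilizer G a) : Equiv.Perm (SubMulAction.ofStabilizer G a)).IsCycle := by
  obtain ⟨x, hx, -⟩ := id hc
  have hxa : x ≠ a := by
    rintro rfl
    exact hx ha
  refine ⟨⟨x, hxa⟩, fun h ↦ hx (congrArg Subtype.val h), fun y hy ↦ ?_⟩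
  obtain ⟨⟨_, j, rfl⟩, hj⟩ :=
    compl_fixedBy_subset_orbit_zpowers hc hx (show (y : α) ∉ fixedBy α c from
      fun h ↦ hy (Subtype.ext h))
  refine ⟨j, ?_⟩
  rw [← toPermHom_apply (stabilizer G a), ← map_zpow]
  exact Subtype.ext hj

lemma ncard_fixedBy_ofStabilizer [Finite α] {a : α} (ha : c ∈ stabilizer G a) :
    (fixedBy (SubMulAction.ofStabilizer G a) (⟨c, ha⟩ : stabilizer G a)).ncard + 1 =
      (fixedBy α c).ncard := by
  rw [← Set.ncard_image_of_injective _ Subtype.val_injective,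
    ← Set.ncard_sdiff_singleton_add_one (show a ∈ fixedBy α c from ha)]
  congr 2
  ext x
  constructor
  · rintro ⟨y, hy, rfl⟩
    exact ⟨congrArg Subtype.val hy, y.2⟩
  · rintro ⟨hx, hxa⟩
    exact ⟨⟨x, hxa⟩, Subtype.ext hx, rfl⟩

theorem isMultiplyPretransitive_of_isCycle [Finite α] [IsPreprimitive G α]
    (hc : (toPerm c : Equiv.Perm α).IsCycle) :
    IsMultiplyPretransitive G α ((fixedBy α c).ncard + 1) := by
  induction hk : (fixedBy α c).ncard generalizing G α with
  | zero =>
    rw [zero_add, is_one_pretransitive_iff]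
    infer_instance
  | succ k ih =>
    obtain ⟨a, ha⟩ : (fixedBy α c).Nonempty := by
      rw [← Set.ncard_pos]
      lia
    have := is_two_pretransitive_of_isCycle hc ⟨a, ha⟩
    rcases Nat.eq_zero_or_pos k with rfl | hpos
    · assumption
    have := isPreprimitive_stabilizer_of_isCycle hc
      (Set.one_lt_ncard_iff_nontrivial.1 (by lia)) a
    rw [SubMulAction.ofStabilizer.isMultiplyPretransitive (a := a)]
    refine ih (isCycle_toPerm_stabilizer hc ha) ?_
    have := ncard_fixedBy_ofStabilizer ha
    lia

end Cycle

section Alternating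

open Equiv Equiv.Perm
open scoped commutatorElement

variable {α : Type*} [Fintype α] [DecidableEq α]

/-- Removing `p` from the cycle of `z` gives `w = swap p (z p) * z`, which is disjoint from `y`, so
the commutator of `y` and `z` equals that of `y` and `swap p (z p)`. -/
lemma isThreeCycle_commutator {y z : Perm α} {p : α} (h : y.support ∩ z.support = {p}) :
    ⁅y, z⁆.IsThreeCycle := by
  have hp : p ∈ y.support ∧ p ∈ z.support := Finset.mem_inter.1 (h ▸ Finset.mem_singleton_self p)
  have eq_p {a : α} (hy : a ∈ y.support) (hz : a ∈ z.support) : a = p :=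
    Finset.mem_singleton.1 (h ▸ Finset.mem_inter.2 ⟨hy, hz⟩)
  have hzp : z p ≠ p := mem_support.1 hp.2
  have hyzp : z p ∉ y.support := fun hy ↦ hzp (eq_p hy (apply_mem_support.2 hp.2))
  set w := swap p (z p) * z with hw
  have hdisj : Disjoint y w := by
    intro a
    refine or_iff_not_imp_left.2 fun hya ↦ ?_
    rcases eq_or_ne a p with rfl | hap
    · exact swap_apply_right a (z a)
    · have hza : z a = a := by_contra fun hza ↦ hap (eq_p (mem_support.2 hya) (mem_support.2 hza))
      rw [hw, mul_apply, hza,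
        swap_apply_of_ne_of_ne hap (ne_of_mem_of_not_mem (mem_support.2 hya) hyzp)]
  have hcomm : ⁅y, z⁆ = swap (z p) (y p) * swap (z p) p := calc
    ⁅y, z⁆ = y * swap p (z p) * (w * y⁻¹) * w⁻¹ * swap p (z p) := by
      rw [hw, commutatorElement_def, mul_inv_rev, swap_inv]
      simp only [mul_assoc, swap_mul_self_mul, swap_mul_self, mul_one]
    _ = y * swap p (z p) * y⁻¹ * swap p (z p) := by
      rw [← hdisj.commute.inv_left.eq, ← mul_assoc, mul_inv_cancel_right]
    _ = swap (z p) (y p) * swap (z p) p := by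
      rw [← swap_apply_apply, notMem_support.1 hyzp, swap_comm (y p), swap_comm p]
  rw [hcomm]
  exact isThreeCycle_swap_mul_swap_same
    (ne_of_mem_of_not_mem (apply_mem_support.2 hp.1) hyzp).symm hzp (mem_support.1 hp.1)

lemma exists_inter_eq_singleton_of_card {s : Finset α} {p : α} (hp : p ∈ s)
    (hcard : 2 * s.card ≤ Fintype.card α + 1) :
    ∃ t : Finset α, s ∩ t = {p} ∧ t.card = s.card := by
  have hpos := Finset.card_pos.2 ⟨p, hp⟩
  obtain ⟨t, hts, ht⟩ := Finset.exists_subset_card_eq (s := sᶜ) (n := s.card - 1) (by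
    rw [Finset.card_compl]
    lia)
  have hst : Disjoint s t := Finset.disjoint_right.2 fun a ha ↦ Finset.mem_compl.1 (hts ha)
  refine ⟨insert p t, ?_, ?_⟩
  · rw [Finset.inter_insert_of_mem hp, Finset.disjoint_iff_inter_eq_empty.1 hst, insert_empty_eq]
  · rw [Finset.card_insert_of_notMem (Finset.disjoint_left.1 hst hp), ht]
    lia

/-- Some conjugate of `y` meets the support of `y` in a single point. -/
theorem alternatingGroup_le_of_card_support_le {G : Subgroup (Perm α)} [IsPreprimitive G α]
    {y : Perm α} (hy : y ∈ G) (hy1 : y ≠ 1) [hG : IsMultiplyPretransitive G α y.support.card]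
    (hcard : 2 * y.support.card ≤ Fintype.card α + 1) : alternatingGroup α ≤ G := by
  obtain ⟨p, hp⟩ : y.support.Nonempty :=
    Finset.nonempty_iff_ne_empty.2 (support_eq_empty_iff.not.2 hy1)
  obtain ⟨t, ht, htcard⟩ := exists_inter_eq_singleton_of_card hp hcard
  obtain ⟨g, hg⟩ : ∃ g : G, y.support.map g.1.toEmbedding = t := by
    have hpre := Set.powersetCard.isPretransitive_of_isMultiplyPretransitive G hG
    obtain ⟨g, hg⟩ := hpre.exists_smul_eq ⟨y.support, rfl⟩ ⟨t, htcard⟩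
    refine ⟨g, ?_⟩
    rw [Finset.map_eq_image]
    exact congrArg Subtype.val hg
  have h3 : ⁅y, g * y * (g : Perm α)⁻¹⁆.IsThreeCycle :=
    isThreeCycle_commutator (by rwa [support_conj, hg])
  have hconj : g * y * (g : Perm α)⁻¹ ∈ G := G.mul_mem (G.mul_mem g.2 hy) (G.inv_mem g.2)
  exact alternatingGroup_le_of_isPreprimitive_of_isThreeCycle_mem ‹_› h3
    (G.mul_mem (G.mul_mem (G.mul_mem hy hconj) (G.inv_mem hy)) (G.inv_mem hconj))

theorem alternatingGroup_le_of_isCycle_of_disjoint {G : Subgroup (Perm α)} [IsPreprimitive G α]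
    {c τ : Perm α} (hc : c.IsCycle) (hcG : c ∈ G) (hτ : τ ≠ 1) (hτG : τ ∈ G)
    (hdisj : Disjoint c τ) : alternatingGroup α ≤ G := by
  have hfix : (fixedBy α (⟨c, hcG⟩ : G)).ncard = Fintype.card α - c.support.card := by
    rw [← Finset.card_compl, ← Set.ncard_coe_finset]
    congr 1
    ext a
    simp [mem_fixedBy]
  have hmarggraf : IsMultiplyPretransitive G α (Fintype.card α - c.support.card + 1) := by
    rw [← hfix]
    exact isMultiplyPretransitive_of_isCycle (c := (⟨c, hcG⟩ : G)) hc
  have hsupp : c.support.card + τ.support.card ≤ Fintype.card α := by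
    rw [← hdisj.card_support_mul]
    exact Finset.card_le_univ _
  have hctwo := hc.two_le_card_support
  -- the smaller of the two supports is both small and within the range of multiple transitivity
  obtain ⟨y, hyG, hy1, hy⟩ : ∃ y ∈ G, y ≠ 1 ∧ y.support.card ≤ Fintype.card α - c.support.card + 1 ∧
      2 * y.support.card ≤ Fintype.card α + 1 := by
    rcases le_total c.support.card τ.support.card with h | h
    · exact ⟨c, hcG, hc.ne_one, by lia, by lia⟩
    · exact ⟨τ, hτG, hτ, by lia, by lia⟩
  have : IsMultiplyPretransitive G α y.support.card :=
    isMultiplyPretransitive_of_le hy.1 (by rw [Nat.card_eq_fintype_card]; lia)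
  exact alternatingGroup_le_of_card_support_le hyG hy1 hy.2

lemma card_subtype_apply_eq_self (x : Perm α) :
    Fintype.card {a // x a = a} = Fintype.card α - x.support.card := by
  rw [← sum_cycleType]
  exact card_fixedPoints x

lemma fullCycleType_eq_parts_partition (x : Perm α) : fullCycleType x = x.partition.parts := by
  rw [fullCycleType, parts_partition, card_subtype_apply_eq_self]

lemma sum_fullCycleType (x : Perm α) : (fullCycleType x).sum = Fintype.card α := by
  rw [fullCycleType_eq_parts_partition, x.partition.parts_sum]

lemma filter_fullCycleType (x : Perm α) : (fullCycleType x).filter (2 ≤ ·) = x.cycleType := by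
  rw [fullCycleType_eq_parts_partition, filter_parts_partition_eq_cycleType]

lemma exists_isCycle_mul_of_cycleType_eq_cons {x : Perm α} {m : ℕ} {s : Multiset ℕ}
    (hx : x.cycleType = m ::ₘ s) : ∃ c τ : Perm α, x = c * τ ∧ Disjoint c τ ∧ c.IsCycle ∧
      c.support.card = m ∧ τ.cycleType = s := by
  obtain ⟨c, τ, rfl, hdisj, hc, hcm⟩ := mem_cycleType_iff.1 (hx ▸ Multiset.mem_cons_self m s)
  refine ⟨c, τ, rfl, hdisj, hc, hcm, ?_⟩
  rwa [hdisj.cycleType_mul, hc.cycleType, hcm, Multiset.singleton_add,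
    Multiset.cons_inj_right] at hx

theorem cycle_type_iin_power_is_cycle_and_jordan_general {i m : ℕ} (hi : 2 ≤ i) (hm : 2 ≤ m)
    (hcop : i.Coprime m) {x : Perm α} (hx : fullCycleType x = {i, i, m}) :
    ((x ^ i).IsCycle ∧ (x ^ i).support.card = m ∧ Fintype.card {a // (x ^ i) a = a} = 2 * i) ∧
      ∀ G : Subgroup (Perm α), x ∈ G → IsPreprimitive G α → alternatingGroup α ≤ G := by
  have htype : x.cycleType = m ::ₘ {i, i} := by
    rw [← filter_fullCycleType, hx, Multiset.filter_eq_self.2 (by simp [hi, hm])]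
    simp only [Multiset.insert_eq_cons, ← Multiset.singleton_add]
    abel
  have hcard : Fintype.card α = 2 * i + m := by
    rw [← sum_fullCycleType x, hx]
    simp only [Multiset.insert_eq_cons, Multiset.sum_cons, Multiset.sum_singleton]
    lia
  obtain ⟨c, τ, rfl, hdisj, hc, rfl, hτ⟩ := exists_isCycle_mul_of_cycleType_eq_cons htype
  have hτi : orderOf τ = i := by
    rw [← lcm_cycleType, hτ]
    simp
  have hxi : (c * τ) ^ i = c ^ i := by
    rw [hdisj.commute.mul_pow, ← hτi, pow_orderOf_eq_one, mul_one]
  have hxm : (c * τ) ^ c.support.card = τ ^ c.support.card := by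
    rw [hdisj.commute.mul_pow, ← hc.orderOf, pow_orderOf_eq_one, one_mul]
  have hci : (c ^ i).IsCycle := hc.pow_iff.2 (hc.orderOf ▸ hcop)
  have hsupp : (c ^ i).support = c.support := support_pow_coprime (hc.orderOf ▸ hcop)
  have hτm : τ ^ c.support.card ≠ 1 := by
    intro h
    rw [← orderOf_dvd_iff_pow_eq_one, hτi] at h
    have := hcop.eq_one_of_dvd h
    lia
  refine ⟨⟨hxi ▸ hci, by rw [hxi, hsupp], ?_⟩, fun G hxG hG ↦ ?_⟩
  · rw [card_subtype_apply_eq_self, hxi, hsupp, hcard, Nat.add_sub_cancel]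
  · exact alternatingGroup_le_of_isCycle_of_disjoint hci (hxi ▸ G.pow_mem hxG i) hτm
      (hxm ▸ G.pow_mem hxG _) (hdisj.pow_disjoint_pow i _)

end Alternating

/-- Let `n ≥ 5` be odd, `2 ≤ i ≤ (n-3)/2` coprime with `n`, and `x ∈ S_n` of cycle type
`(i, i, n-2i)`. Then `x^i` is a cycle of length `n - 2i` fixing `2i ≥ 4` points, and (by
Jordan's theorem) every primitive subgroup of `S_n` containing `x` contains `A_n`. -/
theorem cycle_type_iin_power_is_cycle_and_jordan (n i : ℕ) (hn5 : 5 ≤ n) (hodd : Odd n)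
    (hi1 : 2 ≤ i) (hi2 : i ≤ (n - 3) / 2) (hcop : Nat.gcd i n = 1)
    (x : Equiv.Perm (Fin n)) (hx : fullCycleType x = {i, i, n - 2 * i}) :
    ((x ^ i).IsCycle ∧ (x ^ i).support.card = n - 2 * i ∧
      Fintype.card {a // (x ^ i) a = a} = 2 * i ∧ 4 ≤ 2 * i) ∧
    ∀ G : Subgroup (Equiv.Perm (Fin n)), x ∈ G → IsPrimitiveSubgroup G →
      alternatingGroup (Fin n) ≤ G := by
  have hcop' : i.Coprime (n - 2 * i) := (Nat.gcd_sub_mul_right_right (by lia)).trans hcop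
  obtain ⟨⟨hcycle, hsupp, hfix⟩, hG⟩ :=
    cycle_type_iin_power_is_cycle_and_jordan_general hi1 (by lia) hcop' hx
  exact ⟨⟨hcycle, hsupp, hfix, by lia⟩, fun G hxG ⟨_, hblock⟩ ↦
    hG G hxG { isTrivialBlock_of_isBlock := hblock _ }⟩
end
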